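/- Let G be a group and let φ be the trivial isomorphism between the trivial subgroups ⊥ ≤ G. Then the HNN extension HNNExtension G ⊥ ⊥ φ (the HNN extension of G with trivial associated subgroups) is isomorphic to the free product G ∗ FreeGroup Unit of G with an infinite cyclic group; in particular the stable letter generates an infinite cyclic free factor. -/

import Mathlib

/-!
Both groups have the same universal property: a homomorphism out of either one is a homomorphism
out of `G` together with an arbitrary choice of image for the stable letter, respectively for the
free generator, because the HNN relation over the trivial subgroup is vacuous. The two
homomorphisms obtained this way are mutually inverse, as their composites fix the generators.
-/

/-- The HNN extension of a group `G` with trivial associated subgroups is isomorphic to the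
free product of `G` with the infinite cyclic group `FreeGroup Unit`; moreover the isomorphism
can be chosen so that the stable letter corresponds to the generator of the infinite cyclic
free factor. -/
theorem stmt4 {G : Type*} [Group G] (φ : (⊥ : Subgroup G) ≃* (⊥ : Subgroup G)) :
    ∃ e : HNNExtension G ⊥ ⊥ φ ≃* Monoid.Coprod G (FreeGroup Unit),
      e (HNNExtension.t) = Monoid.Coprod.inr (FreeGroup.of ()) ∧
      ∀ g : G, e (HNNExtension.of g) = Monoid.Coprod.inl g := by
  -- The relation imposed on the stable letter is vacuous: `a` and `φ a` are both `1`.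
  have hx : ∀ a : (⊥ : Subgroup G),
      (Monoid.Coprod.inr (FreeGroup.of ()) : Monoid.Coprod G (FreeGroup Unit)) *
        Monoid.Coprod.inl (a : G) =
      Monoid.Coprod.inl (φ a : G) * Monoid.Coprod.inr (FreeGroup.of ()) := by
    intro a
    rw [Subgroup.mem_bot.1 a.2, Subgroup.mem_bot.1 (φ a).2]
    simp
  let f : HNNExtension G ⊥ ⊥ φ →* Monoid.Coprod G (FreeGroup Unit) :=
    HNNExtension.lift Monoid.Coprod.inl (Monoid.Coprod.inr (FreeGroup.of ())) hx
  let k : Monoid.Coprod G (FreeGroup Unit) →* HNNExtension G ⊥ ⊥ φ :=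
    Monoid.Coprod.lift HNNExtension.of (FreeGroup.lift fun _ => HNNExtension.t)
  have hkf : k.comp f = MonoidHom.id _ :=
    HNNExtension.hom_ext (by ext g; simp [f, k]) (by simp [f, k])
  have hfk : f.comp k = MonoidHom.id _ :=
    Monoid.Coprod.hom_ext (by ext g; simp [f, k]) (by ext u; simp [f, k])
  exact ⟨MonoidHom.toMulEquiv f k hkf hfk, HNNExtension.lift_t _ _ hx,
    HNNExtension.lift_of _ _ hx⟩
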